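/- arXiv:1201.2219 — 2 statements merged into one kernel-verified Lean document; each statement's English description precedes it below -/
import Mathlib

section
/- Let n > q ≥ 2 and 0 ≤ k ≤ q+1. Let Π be a smooth Nambu structure of order q on an open neighborhood U of 0 in ℝⁿ with Π(0) = 0 and with linear part Π_{k,q} at 0. Then the local singular locus of Π near 0 is a smooth submanifold of codimension q+1 containing 0: there exist an open neighborhood W ⊆ U of 0 and a C^∞ diffeomorphism ψ from W onto an open subset of ℝⁿ with ψ(0) = 0 such that {x ∈ W : Π(x) = 0} = {x ∈ W : ψ(x)₁ = ⋯ = ψ(x)_{q+1} = 0}. -/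
open scoped ContDiff

namespace NambuLin

/-- Index set for the standard basis of the `q`-th exterior power of `ℝⁿ`:
increasing multi-indices, encoded as `q`-element subsets of `Fin n`. -/
abbrev Idx (n q : ℕ) := {s : Finset (Fin n) // s.card = q}

/-- A `q`-vector of `ℝⁿ`, given by its coordinates in the standard basis
`{e_{i₁} ∧ ⋯ ∧ e_{i_q}}` of `⋀^q(ℝⁿ)`. -/
abbrev MultiVec (n q : ℕ) := Idx n q → ℝ

/-- The Jacobian matrix of a map `φ : ℝⁿ → ℝⁿ` at a point `x`. -/
noncomputable def jac {n : ℕ} (φ : (Fin n → ℝ) → (Fin n → ℝ)) (x : Fin n → ℝ) :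
    Matrix (Fin n) (Fin n) ℝ :=
  Matrix.of fun i j => fderiv ℝ φ x (Pi.single j 1) i

/-- The `q`-th exterior power `⋀^q A` of a matrix `A`, acting on `q`-vectors in
coordinates: `((⋀^q A) w)_J = ∑_I det(A[J,I]) w_I`. -/
noncomputable def extPow (n q : ℕ) (A : Matrix (Fin n) (Fin n) ℝ) (w : MultiVec n q) :
    MultiVec n q :=
  fun J => ∑ I : Idx n q,
    (A.submatrix (J.1.orderEmbOfFin J.2) (I.1.orderEmbOfFin I.2)).det * w I

/-- The constant `q`-vector `e₁ ∧ ⋯ ∧ e_q` in coordinates. -/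
def stdVec (n q : ℕ) : MultiVec n q :=
  fun J => if (J : Finset (Fin n)) = Finset.univ.filter (fun i : Fin n => (i : ℕ) < q) then 1 else 0

/-- `φ` is a `C^∞` diffeomorphism from the open set `W` onto the open set `φ '' W`. -/
def IsSmoothDiffeoOn {n : ℕ} (φ : (Fin n → ℝ) → (Fin n → ℝ)) (W : Set (Fin n → ℝ)) : Prop :=
  IsOpen W ∧ IsOpen (φ '' W) ∧ ContDiffOn ℝ ∞ φ W ∧
    ∃ ψ : (Fin n → ℝ) → (Fin n → ℝ), ContDiffOn ℝ ∞ ψ (φ '' W) ∧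
      (∀ x ∈ W, ψ (φ x) = x) ∧ (∀ y ∈ φ '' W, φ (ψ y) = y)

/-- `P` is a (smooth) Nambu structure of order `q` on `U`: it is a smooth `q`-vector
field, and around every point where it does not vanish there is a local `C^∞`
coordinate system in which it becomes the constant `q`-vector `e₁ ∧ ⋯ ∧ e_q`. -/
def IsNambu (n q : ℕ) (P : (Fin n → ℝ) → MultiVec n q) (U : Set (Fin n → ℝ)) : Prop :=
  ContDiffOn ℝ ∞ P U ∧
    ∀ p ∈ U, P p ≠ 0 →
      ∃ W, p ∈ W ∧ W ⊆ U ∧ ∃ φ, IsSmoothDiffeoOn φ W ∧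
        ∀ x ∈ W, extPow n q (jac φ x) (P x) = stdVec n q

/-- The signs `ε_j` (`= 1` for the first `k` indices, `= -1` afterwards;
`0`-based indexing, so `ε_j = 1` iff `j < k`). -/
def eps {n : ℕ} (k : ℕ) (j : Fin n) : ℝ := if (j : ℕ) < k then 1 else -1

/-- The set of indices `{1, …, q+1}` (in `0`-based form: `{0,…,q}`). -/
def topIdx (n q : ℕ) : Finset (Fin n) := Finset.univ.filter (fun i : Fin n => (i : ℕ) < q + 1)

/-- The nondegenerate Type 1 linear Nambu structure `Π_{k,q}` of order `q` and
signature `(k, q+1-k)`: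
`Π_{k,q}(x) = ∑_{j=1}^{q+1} (−1)^{j−1} ε_j x_j e₁ ∧ ⋯ ∧ ê_j ∧ ⋯ ∧ e_{q+1}`
(here written with `0`-based indices `j`, whence the sign `(−1)^j`). -/
def modelPi (n q k : ℕ) (x : Fin n → ℝ) : MultiVec n q :=
  fun J => ∑ j : Fin n,
    if ((j : ℕ) < q + 1 ∧ (J : Finset (Fin n)) = (topIdx n q).erase j)
    then (-1 : ℝ) ^ (j : ℕ) * eps k j * x j else 0

theorem cauchyBinet {n q : ℕ} (A : Matrix (Fin q) (Fin n) ℝ) (B : Matrix (Fin n) (Fin q) ℝ) :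
    (A * B).det = ∑ I : Idx n q, (A.submatrix id (I.1.orderEmbOfFin I.2)).det *
      (B.submatrix (I.1.orderEmbOfFin I.2) id).det := by
  have h1 : (A * B).det = ∑ f : Fin q → Fin n, (A.submatrix id f).det * ∏ i, B (f i) i := by
    simp only [Matrix.det_apply', Matrix.mul_apply, Finset.prod_univ_sum, Finset.mul_sum,
      Fintype.piFinset_univ, Finset.sum_mul]
    rw [Finset.sum_comm]
    refine Finset.sum_congr rfl fun f _ => Finset.sum_congr rfl fun σ _ => ?_
    simp only [Finset.prod_mul_distrib, Matrix.submatrix_apply, id]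
    ring
  have h2 : ∀ I : Idx n q, (A.submatrix id (I.1.orderEmbOfFin I.2)).det *
      (B.submatrix (I.1.orderEmbOfFin I.2) id).det =
      ∑ σ : Equiv.Perm (Fin q), (A.submatrix id (I.1.orderEmbOfFin I.2 ∘ σ)).det *
        ∏ i, B (I.1.orderEmbOfFin I.2 (σ i)) i := by
    intro I
    rw [Matrix.det_apply' (B.submatrix _ _), Finset.mul_sum]
    refine Finset.sum_congr rfl fun σ _ => ?_
    have := Matrix.det_permute' σ (A.submatrix id (I.1.orderEmbOfFin I.2))
    rw [Matrix.submatrix_submatrix] at this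
    simp only [Function.id_comp] at this
    change _ = Matrix.det (A.submatrix id (_ ∘ _)) * _
    rw [this]
    simp only [Matrix.submatrix_apply, id]
    ring
  rw [h1, Finset.sum_congr rfl (fun I _ => h2 I), ← Fintype.sum_prod_type'
    (f := fun (I : Idx n q) (σ : Equiv.Perm (Fin q)) =>
      (A.submatrix id (I.1.orderEmbOfFin I.2 ∘ σ)).det *
        ∏ i, B (I.1.orderEmbOfFin I.2 (σ i)) i)]
  symm
  refine Finset.sum_of_injOn (fun x => x.1.1.orderEmbOfFin x.1.2 ∘ x.2) ?_ ?_ ?_ ?_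
  · rintro ⟨I, σ⟩ - ⟨J, τ⟩ - h
    simp only at h
    have hr : (I : Finset (Fin n)) = J := by
      have := congrArg Set.range h
      rw [Set.range_comp, Set.range_comp, σ.surjective.range_eq, τ.surjective.range_eq,
        Set.image_univ, Set.image_univ, Finset.range_orderEmbOfFin,
        Finset.range_orderEmbOfFin] at this
      exact_mod_cast this
    obtain rfl : I = J := Subtype.ext hr
    congr 1
    ext i
    have := congrFun h i
    simp only [Function.comp] at this
    rw [(I.1.orderEmbOfFin I.2).injective this]
  · intro _ _; simp
  · intro f _ hf
    by_cases hinj : Function.Injective f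
    · exfalso
      apply hf
      have hc : (Finset.univ.image f).card = q := by
        rw [Finset.card_image_of_injective _ hinj]; simp
      let g : Fin q → Fin q := fun i =>
        ((Finset.univ.image f).orderIsoOfFin hc).symm ⟨f i, by simp⟩
      have hg : Function.Injective g := by
        intro i j hij
        have := ((Finset.univ.image f).orderIsoOfFin hc).symm.injective hij
        exact hinj (congrArg Subtype.val this)
      refine ⟨(⟨Finset.univ.image f, hc⟩,
        Equiv.ofBijective g (Finite.injective_iff_bijective.1 hg)), by simp, ?_⟩
      ext1 i
      simp only [Function.comp, Equiv.ofBijective_apply, g]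
      rw [← Finset.coe_orderIsoOfFin_apply]
      simp
    · have : (A.submatrix id f).det = 0 := by
        simp only [Function.Injective, not_forall] at hinj
        obtain ⟨i, j, h, hne⟩ := hinj
        exact Matrix.det_zero_of_column_eq hne (by intro k; simp [h])
      rw [this, zero_mul]
  · intro x _; rfl

theorem det_one_submatrix {n q : ℕ} (J K : Idx n q) :
    ((1 : Matrix (Fin n) (Fin n) ℝ).submatrix (J.1.orderEmbOfFin J.2)
      (K.1.orderEmbOfFin K.2)).det = if J = K then 1 else 0 := by
  split_ifs with h
  · subst h
    rw [Matrix.submatrix_one _ (J.1.orderEmbOfFin J.2).injective, Matrix.det_one]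
  · have : ∃ x ∈ J.1, x ∉ K.1 := by
      by_contra! hc
      exact h (Subtype.ext (Finset.eq_of_subset_of_card_le hc (by rw [J.2, K.2])))
    obtain ⟨x, hx, hxK⟩ := this
    rw [← Finset.mem_coe, ← Finset.range_orderEmbOfFin J.1 J.2] at hx
    obtain ⟨i, rfl⟩ := hx
    refine Matrix.det_eq_zero_of_row_eq_zero i fun j => ?_
    rw [Matrix.submatrix_apply, Matrix.one_apply_ne]
    intro he
    rw [he] at hxK
    exact hxK (Finset.orderEmbOfFin_mem _ _ _)

theorem extPow_inv {n q : ℕ} (N A : Matrix (Fin n) (Fin n) ℝ) (h : N * A = 1)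
    (w : MultiVec n q) : extPow n q N (extPow n q A w) = w := by
  funext J
  simp only [extPow, Finset.mul_sum]
  rw [Finset.sum_comm]
  have : ∀ K : Idx n q, ∑ I : Idx n q,
      (N.submatrix (J.1.orderEmbOfFin J.2) (I.1.orderEmbOfFin I.2)).det *
      ((A.submatrix (I.1.orderEmbOfFin I.2) (K.1.orderEmbOfFin K.2)).det * w K) =
      (if J = K then 1 else 0) * w K := by
    intro K
    rw [← det_one_submatrix J K, ← h, Matrix.submatrix_mul _ _ _ id _ Function.bijective_id, cauchyBinet,
      Finset.sum_mul]
    refine Finset.sum_congr rfl fun I _ => ?_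
    simp only [Matrix.submatrix_submatrix, Function.comp_id, Function.id_comp, mul_assoc]
  rw [Finset.sum_congr rfl fun K _ => this K]
  simp

theorem laplace_rel {q : ℕ} (M : Matrix (Fin (q+1)) (Fin q) ℝ) (i : Fin q) :
    ∑ j : Fin (q+1), (-1 : ℝ) ^ (j : ℕ) * M j i * (M.submatrix j.succAbove id).det = 0 := by
  let A : Matrix (Fin (q+1)) (Fin (q+1)) ℝ := Matrix.of fun j c => Fin.cases (M j i) (M j) c
  have h : A.det = 0 :=
    Matrix.det_zero_of_column_eq (i := 0) (j := i.succ) (Fin.succ_ne_zero i).symm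
      (by intro k; simp [A])
  rw [Matrix.det_succ_column_zero] at h
  rw [← h]
  refine Finset.sum_congr rfl fun j _ => ?_
  congr 1

/-- Minors of order at least two have zero derivative where the matrix vanishes. -/
theorem hasFDerivAt_det_zero {E : Type*} [NormedAddCommGroup E] [NormedSpace ℝ E] {q : ℕ}
    (hq : 2 ≤ q) (M : E → Matrix (Fin q) (Fin q) ℝ) (x : E)
    (hd : ∀ i j, DifferentiableAt ℝ (fun y => M y i j) x) (h0 : M x = 0) :
    HasFDerivAt (fun y => (M y).det) (0 : E →L[ℝ] ℝ) x := by
  simp only [Matrix.det_apply']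
  have : ∀ σ : Equiv.Perm (Fin q), HasFDerivAt
      (fun y => ((Equiv.Perm.sign σ : ℤ) : ℝ) * ∏ i, M y (σ i) i) (0 : E →L[ℝ] ℝ) x := by
    intro σ
    have h := (HasFDerivAt.finsetProd (u := Finset.univ) (g := fun i y => M y (σ i) i)
      (fun i _ => (hd (σ i) i).hasFDerivAt)).const_mul ((Equiv.Perm.sign σ : ℤ) : ℝ)
    refine h.congr_fderiv ?_
    rw [Finset.sum_eq_zero, smul_zero]
    intro i _
    have : ∃ j : Fin q, j ≠ i := by
      have : Nontrivial (Fin q) := Fin.nontrivial_iff_two_le.2 hq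
      exact exists_ne i
    obtain ⟨j, hj⟩ := this
    rw [Finset.prod_eq_zero (i := j) (by simp [hj]) (by simp [h0]), zero_smul]
  have h := HasFDerivAt.fun_sum (u := Finset.univ) (fun σ _ => this σ)
  simpa using h

theorem card_topIdx {n q : ℕ} (hn : q < n) : (topIdx n q).card = q + 1 := by
  have : topIdx n q = Finset.univ.map (Fin.castLEEmb (show q + 1 ≤ n from hn)) := by
    ext i
    simp only [topIdx, Finset.mem_filter, Finset.mem_univ, true_and, Finset.mem_map,
      Fin.castLEEmb_apply]
    constructor
    · intro h
      exact ⟨⟨i, h⟩, by ext; simp⟩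
    · rintro ⟨j, rfl⟩
      exact j.2
  rw [this]; simp

/-- The index `{0,…,q} ∖ {j}`. -/
def faceIdx {n q : ℕ} (hn : q < n) (j : Fin (q + 1)) : Idx n q :=
  ⟨(topIdx n q).erase (Fin.castLE hn j), by
    rw [Finset.card_erase_of_mem
      (show Fin.castLE hn j ∈ topIdx n q from Finset.mem_filter.2 ⟨Finset.mem_univ _, j.2⟩), card_topIdx hn]; rfl⟩

/-- The index `{0,…,q-1}`. -/
def baseIdx {n q : ℕ} (hn : q < n) : Idx n q :=
  ⟨Finset.univ.filter (fun i : Fin n => (i : ℕ) < q), by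
    have : Finset.univ.filter (fun i : Fin n => (i : ℕ) < q) =
        Finset.univ.map (Fin.castLEEmb hn.le) := by
      ext i
      simp only [Finset.mem_filter, Finset.mem_univ, true_and, Finset.mem_map,
        Fin.castLEEmb_apply]
      constructor
      · intro h
        exact ⟨⟨i, h⟩, by ext; simp⟩
      · rintro ⟨j, rfl⟩
        simp
    rw [this]; simp⟩

theorem faceIdx_emb {n q : ℕ} (hn : q < n) (j : Fin (q + 1)) :
    ((faceIdx hn j).1.orderEmbOfFin (faceIdx hn j).2 : Fin q → Fin n) =
      Fin.castLE (show q + 1 ≤ n from hn) ∘ j.succAbove := by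
  symm
  apply Finset.orderEmbOfFin_unique
  · intro x
    simp only [faceIdx, Finset.mem_erase, Function.comp, topIdx, Finset.mem_filter,
      Finset.mem_univ, true_and]
    refine ⟨?_, (j.succAbove x).2⟩
    intro h
    exact Fin.succAbove_ne j x (Fin.castLE_injective _ h)
  · exact (Fin.strictMono_castLE _).comp (Fin.strictMono_succAbove j)

theorem modelPi_face {n q : ℕ} (k : ℕ) (hn : q < n) (j : Fin (q + 1)) (v : Fin n → ℝ) :
    modelPi n q k v (faceIdx hn j) =
      (-1 : ℝ) ^ (j : ℕ) * eps k (Fin.castLE hn j : Fin n) * v (Fin.castLE hn j) := by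
  unfold modelPi
  rw [Finset.sum_eq_single (Fin.castLE hn j)]
  · rw [if_pos]
    · simp
    · exact ⟨j.2, rfl⟩
  · intro b _ hb
    rw [if_neg]
    rintro ⟨hb1, h⟩
    simp only [faceIdx] at h
    have hmem : b ∈ topIdx n q := 
      Finset.mem_filter.2 ⟨Finset.mem_univ _, hb1⟩
    have : b ∈ (topIdx n q).erase (Fin.castLE hn j) := Finset.mem_erase.2 ⟨hb, hmem⟩
    rw [h] at this
    simp at this
  · simp

theorem local_factor {n q : ℕ} (hn : q < n) {U : Set (Fin n → ℝ)}
    {P : (Fin n → ℝ) → MultiVec n q} (hN : IsNambu n q P U) {p : Fin n → ℝ} (hp : p ∈ U)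
    (hne : P p ≠ 0) :
    ∃ M : (Fin n → ℝ) → Matrix (Fin (q + 1)) (Fin q) ℝ,
      (∀ i j, DifferentiableAt ℝ (fun x => M x i j) p) ∧
      ∀ᶠ x in nhds p, ∀ j, P x (faceIdx hn j) = ((M x).submatrix j.succAbove id).det := by
  obtain ⟨W, hpW, -, φ, ⟨hWo, hVo, hφ, ψ, hψ, hl, -⟩, hstd⟩ := hN.2 p hp hne
  have hφ1 : ∀ x ∈ W, ContDiffAt ℝ ∞ φ x := fun x hx => hφ.contDiffAt (hWo.mem_nhds hx)
  have hψ1 : ∀ x ∈ W, ContDiffAt ℝ ∞ ψ (φ x) := fun x hx =>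
    hψ.contDiffAt (hVo.mem_nhds ⟨x, hx, rfl⟩)
  have hinv : ∀ x ∈ W, jac ψ (φ x) * jac φ x = 1 := by
    intro x hx
    have h1 : (fun y => ψ (φ y)) =ᶠ[nhds x] id := by
      filter_upwards [hWo.mem_nhds hx] with y hy using hl y hy
    have h2 : HasFDerivAt (fun y => ψ (φ y)) ((fderiv ℝ ψ (φ x)).comp (fderiv ℝ φ x)) x :=
      ((hψ1 x hx).differentiableAt (by simp)).hasFDerivAt.comp x
        ((hφ1 x hx).differentiableAt (by simp)).hasFDerivAt
    have h3 : (fderiv ℝ ψ (φ x)).comp (fderiv ℝ φ x) = ContinuousLinearMap.id ℝ _ :=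
      h2.unique ((hasFDerivAt_id x).congr_of_eventuallyEq h1)
    have hj : ∀ (f : (Fin n → ℝ) → (Fin n → ℝ)) (z : Fin n → ℝ),
        jac f z = LinearMap.toMatrix' (fderiv ℝ f z : (Fin n → ℝ) →ₗ[ℝ] (Fin n → ℝ)) := by
      intro f z
      ext i j
      simp [jac, LinearMap.toMatrix'_apply]
    rw [hj, hj, ← LinearMap.toMatrix'_comp, ← ContinuousLinearMap.toLinearMap_comp, h3]
    simp
  refine ⟨fun x => (jac ψ (φ x)).submatrix (Fin.castLE (show q + 1 ≤ n from hn))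
    ((baseIdx hn).1.orderEmbOfFin (baseIdx hn).2), ?_, ?_⟩
  · intro i j
    simp only [Matrix.submatrix_apply, jac, Matrix.of_apply]
    have h1 : ContDiffAt ℝ 1 (fderiv ℝ ψ) (φ p) := (hψ1 p hpW).fderiv_right (by norm_cast)
    have h2 : DifferentiableAt ℝ (fun x => fderiv ℝ ψ (φ x)) p :=
      (h1.differentiableAt (by simp)).comp p ((hφ1 p hpW).differentiableAt (by simp))
    have h3 := h2.clm_apply (differentiableAt_const
      (Pi.single ((baseIdx hn).1.orderEmbOfFin (baseIdx hn).2 j) (1 : ℝ)))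
    exact differentiableAt_pi.1 h3 _
  · filter_upwards [hWo.mem_nhds hpW] with x hx j
    have h := extPow_inv _ _ (hinv x hx) (P x)
    rw [hstd x hx] at h
    rw [← h]
    unfold extPow
    rw [Finset.sum_eq_single (baseIdx hn)]
    · simp only [stdVec, baseIdx, if_true, mul_one, Matrix.submatrix_submatrix, faceIdx_emb,
        Function.comp_id]
    · intro I _ hI
      have : stdVec n q I = 0 := by
        simp only [stdVec]
        rw [if_neg]
        intro h
        exact hI (Subtype.ext h)
      rw [this, mul_zero]
    · simp

theorem key_vanish {n q : ℕ} (hq : 2 ≤ q) (hn : q < n) {U : Set (Fin n → ℝ)}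
    {P : (Fin n → ℝ) → MultiVec n q} (hN : IsNambu n q P U) {p : Fin n → ℝ} (hp : p ∈ U)
    (hPd : DifferentiableAt ℝ P p) (h0 : ∀ j, P p (faceIdx hn j) = 0)
    (hs : ∀ j : Fin (q + 1), ∃ v, ∀ i, fderiv ℝ P p v (faceIdx hn i) = if i = j then 1 else 0) :
    P p = 0 := by
  by_contra hne
  obtain ⟨M, hM, hPM⟩ := local_factor hn hN hp hne
  have hy : ∀ j, HasFDerivAt (fun x => P x (faceIdx hn j))
      ((ContinuousLinearMap.proj (faceIdx hn j)).comp (fderiv ℝ P p)) p := fun j =>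
    hasFDerivAt_pi'.1 hPd.hasFDerivAt _
  have hM0 : M p = 0 := by
    ext j i
    have hz : (fun x => ∑ j : Fin (q + 1), (-1 : ℝ) ^ (j : ℕ) * M x j i * P x (faceIdx hn j))
        =ᶠ[nhds p] fun _ => 0 := by
      filter_upwards [hPM] with x hx
      simp only [hx]
      exact laplace_rel (M x) i
    have hd := HasFDerivAt.fun_sum (u := Finset.univ) (fun (j : Fin (q + 1)) _ =>
      ((hM j i).hasFDerivAt.const_mul ((-1 : ℝ) ^ (j : ℕ))).mul (hy j))
    have hu := hd.unique ((hasFDerivAt_const (0 : ℝ) p).congr_of_eventuallyEq hz)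
    obtain ⟨v, hv⟩ := hs j
    have := congrArg (fun L => L v) hu
    simpa [h0, hv, sum_apply] using this
  obtain ⟨v, hv⟩ := hs 0
  have h1 := hasFDerivAt_det_zero hq (fun x => (M x).submatrix (Fin.succAbove 0) id) p
    (fun i j => hM _ _) (by simp [hM0])
  have h2 := (hy 0).unique (h1.congr_of_eventuallyEq (by
    filter_upwards [hPM] with x hx using hx 0))
  have := congrArg (fun L => L v) h2
  simp [hv] at this

/-- The adapted coordinates. -/
def coordMap {n q : ℕ} (hn : q < n) (P : (Fin n → ℝ) → MultiVec n q) (x : Fin n → ℝ) :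
    Fin n → ℝ :=
  fun j => if h : (j : ℕ) < q + 1 then P x (faceIdx hn ⟨j, h⟩) else x j

theorem coordMap_hasFDerivAt {n q : ℕ} (hn : q < n) {P : (Fin n → ℝ) → MultiVec n q}
    {p : Fin n → ℝ} (hP : DifferentiableAt ℝ P p) :
    ∃ L : (Fin n → ℝ) →L[ℝ] (Fin n → ℝ), HasFDerivAt (coordMap hn P) L p ∧
      ∀ v j, L v j = if h : (j : ℕ) < q + 1 then fderiv ℝ P p v (faceIdx hn ⟨j, h⟩) else v j := by
  refine ⟨ContinuousLinearMap.pi fun j => if h : (j : ℕ) < q + 1 then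
    (ContinuousLinearMap.proj (faceIdx hn ⟨j, h⟩)).comp (fderiv ℝ P p) else
      ContinuousLinearMap.proj j, ?_, ?_⟩
  · rw [hasFDerivAt_pi]
    intro j
    by_cases h : (j : ℕ) < q + 1
    · simp only [coordMap, h, dif_pos]
      exact hasFDerivAt_pi'.1 hP.hasFDerivAt _
    · simp only [coordMap, h, dif_neg, not_false_eq_true]
      exact hasFDerivAt_apply j p
  · intro v j
    simp only [ContinuousLinearMap.pi_apply]
    split_ifs <;> rfl

theorem coordMap_contDiffAt {n q : ℕ} (hn : q < n) {P : (Fin n → ℝ) → MultiVec n q}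
    {p : Fin n → ℝ} (hP : ContDiffAt ℝ ∞ P p) : ContDiffAt ℝ ∞ (coordMap hn P) p := by
  rw [contDiffAt_pi]
  intro j
  by_cases h : (j : ℕ) < q + 1
  · simp only [coordMap, h, dif_pos]
    exact contDiffAt_pi.1 hP _
  · simp only [coordMap, h, dif_neg, not_false_eq_true]
    fun_prop

/-- (result 1) recalled in the paper, from Dufour–Zung 1999).
The local singular locus of a smooth Nambu structure of order `q` whose linear part
at `0` is the nondegenerate Type 1 model `Π_{k,q}` is, near `0`, a smooth
submanifold of codimension `q+1` through `0`: in suitable local smooth coordinates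
`ψ` it is `{ψ₁ = ⋯ = ψ_{q+1} = 0}`. -/
theorem singular_locus_submanifold (n q k : ℕ) (hq : 2 ≤ q) (hn : q < n) (hk : k ≤ q + 1)
    (U : Set (Fin n → ℝ)) (hU : IsOpen U) (h0U : (0 : Fin n → ℝ) ∈ U)
    (P : (Fin n → ℝ) → MultiVec n q) (hN : IsNambu n q P U)
    (hP0 : P 0 = 0) (hlin : ∀ v : Fin n → ℝ, fderiv ℝ P 0 v = modelPi n q k v) :
    ∃ W : Set (Fin n → ℝ), W ⊆ U ∧ (0 : Fin n → ℝ) ∈ W ∧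
      ∃ ψ : (Fin n → ℝ) → (Fin n → ℝ), IsSmoothDiffeoOn ψ W ∧ ψ 0 = 0 ∧
        ∀ x ∈ W, (P x = 0 ↔ ∀ j : Fin n, (j : ℕ) < q + 1 → ψ x j = 0) := by
  have hPc : ∀ x ∈ U, ContDiffAt ℝ ∞ P x := fun x hx => hN.1.contDiffAt (hU.mem_nhds hx)
  have hFc : ∀ x ∈ U, ContDiffAt ℝ ∞ (coordMap hn P) x := fun x hx =>
    coordMap_contDiffAt hn (hPc x hx)
  obtain ⟨L, hL, hLv⟩ := coordMap_hasFDerivAt hn ((hPc 0 h0U).differentiableAt (by simp))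
  have hinj : Function.Injective L := by
    rw [injective_iff_map_eq_zero]
    intro v hv
    funext j
    have h := congrFun hv j
    rw [hLv] at h
    split_ifs at h with hj
    · rw [hlin, modelPi_face] at h
      have he : eps k (Fin.castLE hn (⟨j, hj⟩ : Fin (q + 1)) : Fin n) ≠ 0 := by
        unfold eps; split_ifs <;> norm_num
      have hs : (-1 : ℝ) ^ (j : ℕ) ≠ 0 := pow_ne_zero _ (by norm_num)
      exact (mul_eq_zero.1 h).resolve_left (mul_ne_zero hs he)
    · exact h
  let e : (Fin n → ℝ) ≃L[ℝ] (Fin n → ℝ) :=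
    (LinearEquiv.ofInjectiveEndo (L : (Fin n → ℝ) →ₗ[ℝ] (Fin n → ℝ)) hinj).toContinuousLinearEquiv
  have heL : (e : (Fin n → ℝ) →L[ℝ] (Fin n → ℝ)) = L := by
    ext1 v; rfl
  have hL' : HasFDerivAt (coordMap hn P) (e : (Fin n → ℝ) →L[ℝ] (Fin n → ℝ)) 0 := by
    rw [heL]; exact hL
  let Φ := (hFc 0 h0U).toOpenPartialHomeomorph (coordMap hn P) hL' (by simp)
  have hΦ : ∀ x, Φ x = coordMap hn P x := fun x => rfl
  have h0Φ : (0 : Fin n → ℝ) ∈ Φ.source :=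
    (hFc 0 h0U).mem_toOpenPartialHomeomorph_source hL' (by simp)
  have hFon : ContDiffOn ℝ ∞ (coordMap hn P) U := fun x hx => (hFc x hx).contDiffWithinAt
  let R : Set ((Fin n → ℝ) →L[ℝ] (Fin n → ℝ)) :=
    Set.range ((↑) : ((Fin n → ℝ) ≃L[ℝ] (Fin n → ℝ)) → _)
  have hRo : IsOpen R := ContinuousLinearEquiv.isOpen
  have hopen : IsOpen (U ∩ fderiv ℝ (coordMap hn P) ⁻¹' R) :=
    (hFon.continuousOn_fderiv_of_isOpen hU (by norm_cast)).isOpen_inter_preimage hU hRo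
  let W : Set (Fin n → ℝ) := Φ.source ∩ (U ∩ fderiv ℝ (coordMap hn P) ⁻¹' R)
  have hWo : IsOpen W := Φ.open_source.inter hopen
  have hWs : W ⊆ Φ.source := Set.inter_subset_left
  have hWU : W ⊆ U := fun x hx => hx.2.1
  refine ⟨W, hWU, ⟨h0Φ, h0U, ?_⟩, coordMap hn P, ⟨hWo, ?_, hFon.mono hWU, Φ.symm, ?_, ?_, ?_⟩,
    ?_, ?_⟩
  · exact ⟨e, hL'.fderiv.symm⟩
  · exact Φ.isOpen_image_of_subset_source hWo hWs
  · rintro _ ⟨x, hx, rfl⟩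
    have hsx : Φ.symm (coordMap hn P x) = x := Φ.left_inv (hWs hx)
    obtain ⟨e', he'⟩ := hx.2.2
    refine (Φ.contDiffAt_symm (f₀' := e') (Φ.map_source (hWs hx)) ?_ ?_).contDiffWithinAt
    · rw [hΦ, hsx, he']
      exact ((hFc x (hWU hx)).differentiableAt (by simp)).hasFDerivAt
    · rw [hΦ, hsx]
      exact hFc x (hWU hx)
  · intro x hx
    exact Φ.left_inv (hWs hx)
  · rintro _ ⟨x, hx, rfl⟩
    exact congrArg (coordMap hn P) (Φ.left_inv (hWs hx))
  · funext j
    simp [coordMap, hP0]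
  · intro x hx
    constructor
    · intro h j hj
      simp [coordMap, h, hj]
    · intro h
      have hPd := (hPc x (hWU hx)).differentiableAt (n := ∞) (by simp)
      refine key_vanish hq hn hN (hWU hx) hPd ?_ ?_
      · intro j
        have := h (Fin.castLE hn j) j.2
        unfold coordMap at this
        rwa [dif_pos (show ((Fin.castLE hn j : Fin n) : ℕ) < q + 1 from j.2)] at this
      · intro j
        obtain ⟨e', he'⟩ := hx.2.2
        obtain ⟨L', hL1, hL2⟩ := coordMap_hasFDerivAt hn hPd
        rw [hL1.fderiv] at he'
        refine ⟨e'.symm (Pi.single (Fin.castLE hn j) 1), fun i => ?_⟩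
        have h1 := hL2 (e'.symm (Pi.single (Fin.castLE hn j) 1)) (Fin.castLE hn i)
        rw [← he'] at h1
        simp only [Fin.val_castLE, Fin.is_lt, dif_pos, Fin.eta] at h1
        rw [← h1]
        simp [Pi.single_apply]

end NambuLin
end

section
/- Let n > q ≥ 3 and 3 ≤ k ≤ q, and let Π be a smooth Nambu structure of order q on an open neighborhood U of 0 in ℝⁿ with Π(0) = 0 and with linear part Π_{k,q} at 0. Then there is an open neighborhood W ⊆ U of 0 such that the sliced q-vector field Λ := (e*_{k+1} ∧ ⋯ ∧ e*_{q+1}) ⌟ Π is a Nambu structure of order k−1 on W, and the linear part of Λ at 0 equals (e*_{k+1} ∧ ⋯ ∧ e*_{q+1}) ⌟ Π_{k,q}, which is of the form s · ∑_{j=1}^{k} (−1)^{j−1} x_j e₁ ∧ ⋯ ∧ ê_j ∧ ⋯ ∧ e_k for a sign s ∈ {+1, −1} (i.e. the nondegenerate Type 1 elliptic linear Nambu structure of order k−1 in the coordinates x₁,…,x_k, up to sign). -/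
open scoped ContDiff

namespace NambuLin

/-- The shuffle sign `(−1)^{#{(s,t) ∈ S × K : s > t}}`: for disjoint increasing
multi-indices `S, K` one has `e*_S ∧ e*_K = shufSign S K · e*_{S ∪ K}`. -/
def shufSign {n : ℕ} (S K : Finset (Fin n)) : ℝ :=
  (-1 : ℝ) ^ (((S ×ˢ K).filter fun p : Fin n × Fin n => p.2 < p.1).card)

/-- The contraction `e*_S ⌟ w` of a `q`-vector `w` with the basis covector
`e*_S = e*_{s₁} ∧ ⋯ ∧ e*_{s_r}` (`S = {s₁ < ⋯ < s_r}`, `r = q - m`), determined by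
`⟨e*_K, e*_S ⌟ w⟩ = ⟨e*_S ∧ e*_K, w⟩`: its `K`-th coordinate is
`shufSign S K · w_{S ∪ K}` when `S, K` are disjoint (and `0` otherwise, in
accordance with the graded pairing). -/
def contr (n q m : ℕ) (S : Finset (Fin n)) (w : MultiVec n q) : MultiVec n m :=
  fun K => if h : Disjoint S (K : Finset (Fin n)) ∧ (S ∪ (K : Finset (Fin n))).card = q
    then shufSign S K.1 * w ⟨S ∪ K.1, h.2⟩ else 0

/-- The set of indices `{k+1, …, q+1}` (in `0`-based form: `{k,…,q}`), so that
`e*_{k+1} ∧ ⋯ ∧ e*_{q+1}` corresponds to `sliceIdx n q k`. -/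
def sliceIdx (n q k : ℕ) : Finset (Fin n) :=
  Finset.univ.filter fun i : Fin n => k ≤ (i : ℕ) ∧ (i : ℕ) < q + 1

/-- The elliptic linear Nambu structure of order `k-1` in the coordinates
`x₁,…,x_k`: `∑_{j=1}^{k} (−1)^{j−1} x_j e₁ ∧ ⋯ ∧ ê_j ∧ ⋯ ∧ e_k`
(written with `0`-based indices `j`, whence the sign `(−1)^j`). -/
def ellipticSmall (n k : ℕ) (x : Fin n → ℝ) : MultiVec n (k - 1) :=
  fun J => ∑ j : Fin n,
    if ((j : ℕ) < k ∧
        (J : Finset (Fin n)) = (Finset.univ.filter fun i : Fin n => (i : ℕ) < k).erase j)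
    then (-1 : ℝ) ^ (j : ℕ) * x j else 0


open Set.powersetCard in
theorem alt_expand {n m : ℕ} (f : (Fin n → ℝ) [⋀^Fin m]→ₗ[ℝ] ℝ) (v : Fin m → Fin n → ℝ) :
    f v = ∑ K : Idx n m, (Matrix.of fun i j => v i (K.1.orderEmbOfFin K.2 j)).det *
      f (fun i => Pi.single (K.1.orderEmbOfFin K.2 i) 1) := by
  have h1 : f v = exteriorPower.alternatingMapLinearEquiv f (exteriorPower.ιMulti ℝ m v) := by
    simp
  let b := (Pi.basisFun ℝ (Fin n))
  rw [h1, ← (b.exteriorPower m).sum_repr (exteriorPower.ιMulti ℝ m v), map_sum]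
  let e : Set.powersetCard (Fin n) m ≃ Idx n m :=
    ⟨fun x => ⟨x.1, x.2⟩, fun x => ⟨x.1, x.2⟩, fun _ => rfl, fun _ => rfl⟩
  refine Fintype.sum_equiv e _ _ fun K => ?_
  rw [map_smul, exteriorPower.basis_repr_apply, exteriorPower.ιMultiDual_apply_ιMulti,
    exteriorPower.basis_apply, smul_eq_mul, exteriorPower.ιMulti_family,
    exteriorPower.alternatingMapLinearEquiv_apply_ιMulti]
  simp only [b, Pi.basisFun_repr, Module.Basis.coord_apply]
  congr 2
  ext i j
  simp [Set.powersetCard.ofFinEmbEquiv_symm_apply]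
  rfl

theorem extPow_mul {n q : ℕ} (A B : Matrix (Fin n) (Fin n) ℝ) (w : MultiVec n q) :
    extPow n q (A * B) w = extPow n q A (extPow n q B w) := by
  have key : ∀ J I : Idx n q, ((A * B).submatrix (J.1.orderEmbOfFin J.2) (I.1.orderEmbOfFin I.2)).det
      = ∑ K : Idx n q, (A.submatrix (J.1.orderEmbOfFin J.2) (K.1.orderEmbOfFin K.2)).det *
        (B.submatrix (K.1.orderEmbOfFin K.2) (I.1.orderEmbOfFin I.2)).det := by
    intro J I
    let L : (Fin n → ℝ) →ₗ[ℝ] (Fin q → ℝ) :=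
      Matrix.vecMulLinear (B.submatrix id (I.1.orderEmbOfFin I.2))
    have := alt_expand ((Matrix.detRowAlternating (R := ℝ) (n := Fin q)).compLinearMap L)
      (fun i => A (J.1.orderEmbOfFin J.2 i))
    have e1 : ((A * B).submatrix (J.1.orderEmbOfFin J.2) (I.1.orderEmbOfFin I.2)) =
        (fun i => L (A (J.1.orderEmbOfFin J.2 i))) := by
      ext i j
      simp [L, Matrix.mul_apply, Matrix.vecMul, dotProduct]
    rw [e1]
    refine this.trans (Finset.sum_congr rfl fun K _ => ?_)
    congr 1
    show Matrix.det _ = _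
    congr 1
    ext i j
    simp [L]
  funext J
  simp only [extPow, key, Finset.sum_mul, Finset.mul_sum]
  rw [Finset.sum_comm]
  simp only [mul_assoc]

theorem extPow_one {n q : ℕ} (w : MultiVec n q) : extPow n q 1 w = w := by
  funext J
  rw [extPow, Finset.sum_eq_single J]
  · rw [Matrix.submatrix_one _ (J.1.orderEmbOfFin J.2).injective]; simp
  · intro I _ hI
    have : ∃ i ∈ J.1, i ∉ I.1 := by
      by_contra! h
      exact hI (Subtype.ext (Finset.eq_of_subset_of_card_le h (by rw [I.2, J.2])).symm)
    obtain ⟨i, hi, hi'⟩ := this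
    have hi2 : i ∈ Set.range (J.1.orderEmbOfFin J.2) := by
      rw [Finset.range_orderEmbOfFin]; exact hi
    obtain ⟨a, rfl⟩ := hi2
    rw [Matrix.det_eq_zero_of_row_eq_zero a, zero_mul]
    intro b
    rw [Matrix.submatrix_apply, Matrix.one_apply_ne]
    intro hh
    rw [hh] at hi'
    exact hi' (Finset.orderEmbOfFin_mem _ _ _)
  · simp

theorem card_std {n q : ℕ} (h : q ≤ n) :
    (Finset.univ.filter (fun i : Fin n => (i : ℕ) < q)).card = q := by
  rw [Fin.card_filter_val_lt]; omega

def stdIdx {n q : ℕ} (h : q ≤ n) : Idx n q :=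
  ⟨Finset.univ.filter (fun i : Fin n => (i : ℕ) < q), card_std h⟩

theorem stdIdx_emb {n q : ℕ} (h : q ≤ n) (i : Fin q) :
    (stdIdx h).1.orderEmbOfFin (stdIdx h).2 i = Fin.castLE h i := by
  have := Finset.orderEmbOfFin_unique (stdIdx h).2 (f := Fin.castLE h)
    (fun x => by simp [stdIdx]) (Fin.strictMono_castLE h)
  exact (congrFun this i).symm

theorem stdVec_eq {n q : ℕ} (h : q ≤ n) (J : Idx n q) :
    stdVec n q J = if J = stdIdx h then 1 else 0 := by
  simp only [stdVec, stdIdx, Subtype.ext_iff]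

theorem extPow_smul {n q : ℕ} (A : Matrix (Fin n) (Fin n) ℝ) (c : ℝ) (w : MultiVec n q) :
    extPow n q A (c • w) = c • extPow n q A w := by
  funext J
  simp only [extPow, Pi.smul_apply, smul_eq_mul, Finset.mul_sum]
  exact Finset.sum_congr rfl fun _ _ => by ring

theorem extPow_std {n q : ℕ} (h : q ≤ n) (B : Matrix (Fin n) (Fin n) ℝ) (J : Idx n q) :
    extPow n q B (stdVec n q) J = (B.submatrix (J.1.orderEmbOfFin J.2) (Fin.castLE h)).det := by
  rw [extPow, Finset.sum_eq_single (stdIdx h)]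
  · rw [stdVec_eq h, if_pos rfl, mul_one]
    congr 1; ext i j; simp only [Matrix.submatrix_apply, stdIdx_emb]
  · intro I _ hI; rw [stdVec_eq h, if_neg hI, mul_zero]
  · simp

/-- determinant with fixed top rows -/
def topDet {r m q : ℕ} (e : Fin r ⊕ Fin m ≃ Fin q) (G : Fin r → Fin q → ℝ) :
    (Fin q → ℝ) [⋀^Fin m]→ₗ[ℝ] ℝ where
  toFun w := Matrix.detRowAlternating (R := ℝ) (n := Fin q) (fun i => Sum.elim G w (e.symm i))
  map_update_add' := by
    intro _ w i x y
    have : ∀ z, (fun j => Sum.elim G (Function.update w i z) (e.symm j)) =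
      Function.update (fun j => Sum.elim G w (e.symm j)) (e (Sum.inr i)) z := by
      intro z; funext j
      obtain ⟨j, rfl⟩ := e.surjective j
      rcases j with j | j
      · simp
      · by_cases h : j = i
        · subst h; simp
        · simp [h]
    simp only [this, AlternatingMap.map_update_add]
  map_update_smul' := by
    intro _ w i x y
    have : ∀ z, (fun j => Sum.elim G (Function.update w i z) (e.symm j)) =
      Function.update (fun j => Sum.elim G w (e.symm j)) (e (Sum.inr i)) z := by
      intro z; funext j
      obtain ⟨j, rfl⟩ := e.surjective j
      rcases j with j | j
      · simp
      · by_cases h : j = i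
        · subst h; simp
        · simp [h]
    simp only [this, AlternatingMap.map_update_smul]
  map_eq_zero_of_eq' := by
    intro w i j h hij
    apply AlternatingMap.map_eq_zero_of_eq _ _ (i := e (Sum.inr i)) (j := e (Sum.inr j))
    · simpa using h
    · simpa using hij

theorem topDet_apply {r m q : ℕ} (e : Fin r ⊕ Fin m ≃ Fin q) (G : Fin r → Fin q → ℝ)
    (w : Fin m → Fin q → ℝ) :
    topDet e G w = (Matrix.of fun i => Sum.elim G w (e.symm i)).det := rfl

theorem extPow_topDet {n r m q : ℕ} (h : q ≤ n) (e : Fin r ⊕ Fin m ≃ Fin q)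
    (G : Fin r → Fin q → ℝ) (C B : Matrix (Fin n) (Fin n) ℝ) (J : Idx n m) :
    extPow n m C (fun K => topDet e G (fun i c => B (K.1.orderEmbOfFin K.2 i) (Fin.castLE h c))) J =
      topDet e G (fun i c => (C * B) (J.1.orderEmbOfFin J.2 i) (Fin.castLE h c)) := by
  let L : (Fin n → ℝ) →ₗ[ℝ] (Fin q → ℝ) :=
      Matrix.vecMulLinear (B.submatrix id (Fin.castLE h))
  have := alt_expand ((topDet e G).compLinearMap L) (fun i => C (J.1.orderEmbOfFin J.2 i))
  rw [extPow]
  refine Eq.trans ?_ (this.symm.trans ?_)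
  · refine Finset.sum_congr rfl fun K _ => ?_
    congr 1
    rw [AlternatingMap.compLinearMap_apply]
    congr 1
    ext i c
    simp [L]
  · rw [AlternatingMap.compLinearMap_apply]
    congr 1

theorem sign_shuffle {n r m : ℕ} (S K : Finset (Fin n)) (hS : S.card = r) (hK : K.card = m)
    (hd : Disjoint S K) (σ : Equiv.Perm (Fin (r + m))) (u : Fin (r + m) → Fin n)
    (hu : u = Fin.append (S.orderEmbOfFin hS) (K.orderEmbOfFin hK))
    (hσ : ∀ i j, σ i < σ j ↔ u i < u j) :
    (((Equiv.Perm.sign σ : ℤˣ) : ℤ) : ℝ) = shufSign S K := by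
  have hSne : ∀ a b, S.orderEmbOfFin hS a ≠ K.orderEmbOfFin hK b := by
    intro a b h
    exact Finset.disjoint_left.mp hd (Finset.orderEmbOfFin_mem S hS a)
      (h ▸ Finset.orderEmbOfFin_mem K hK b)
  have h1 : (((Equiv.Perm.sign σ : ℤˣ) : ℤ) : ℝ) =
      ∏ i : Fin (r+m), ∏ j : Fin (r+m), if i < j then (if u i < u j then (1:ℝ) else -1) else 1 := by
    rw [Equiv.Perm.sign_eq_prod_prod_Ioi]
    push_cast
    refine Finset.prod_congr rfl fun i _ => ?_
    rw [← Finset.prod_filter]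
    refine Finset.prod_congr (by ext; simp) fun j _ => ?_
    by_cases h : u i < u j
    · simp [h, hσ]
    · simp [h, hσ]
  rw [h1]
  simp only [Fin.prod_univ_add]
  have e1 : ∀ i j : Fin r, (if Fin.castAdd m i < Fin.castAdd m j then
      (if u (Fin.castAdd m i) < u (Fin.castAdd m j) then (1:ℝ) else -1) else 1) = 1 := by
    intro i j
    by_cases h : i < j
    · simp [hu, h]
    · exact if_neg (fun hh => h hh)
  have e2 : ∀ i j : Fin m, (if Fin.natAdd r i < Fin.natAdd r j then
      (if u (Fin.natAdd r i) < u (Fin.natAdd r j) then (1:ℝ) else -1) else 1) = 1 := by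
    intro i j
    by_cases h : i < j
    · simp [hu, h]
    · simp [h]
  have e3 : ∀ (i : Fin m) (j : Fin r), (if Fin.natAdd r i < Fin.castAdd m j then
      (if u (Fin.natAdd r i) < u (Fin.castAdd m j) then (1:ℝ) else -1) else 1) = 1 := by
    intro i j
    rw [if_neg]
    simp only [Fin.lt_def, Fin.val_natAdd, Fin.val_castAdd]
    omega
  have e4 : ∀ (i : Fin r) (j : Fin m), (if Fin.castAdd m i < Fin.natAdd r j then
      (if u (Fin.castAdd m i) < u (Fin.natAdd r j) then (1:ℝ) else -1) else 1) =
      if K.orderEmbOfFin hK j < S.orderEmbOfFin hS i then -1 else 1 := by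
    intro i j
    rw [if_pos (by simp only [Fin.lt_def, Fin.val_natAdd, Fin.val_castAdd]; omega)]
    simp only [hu, Fin.append_left, Fin.append_right]
    rcases lt_or_gt_of_ne (hSne i j) with h | h
    · rw [if_pos h, if_neg h.not_gt]
    · rw [if_neg h.not_gt, if_pos h]
  simp only [e1, e2, e3, e4, Finset.prod_const_one, one_mul, mul_one]
  rw [shufSign, ← Finset.prod_const, Finset.prod_filter, Finset.prod_product]
  have aux : ∀ (A : Finset (Fin n)) (a : ℕ) (hA : A.card = a) (g : Fin n → ℝ),
      ∏ x ∈ A, g x = ∏ i, g (A.orderEmbOfFin hA i) := by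
    intro A a hA g
    conv_lhs => rw [← Finset.map_orderEmbOfFin_univ A hA]
    rw [Finset.prod_map]
    rfl
  rw [aux S r hS]
  exact Finset.prod_congr rfl fun i _ => by rw [aux K m hK]

/-- the block equivalence -/
def blk {r m q : ℕ} (h : r + m = q) : Fin r ⊕ Fin m ≃ Fin q := finSumFinEquiv.trans (finCongr h)

theorem contr_eq {n r m q : ℕ} (h : q ≤ n) (hq : r + m = q) (S : Finset (Fin n)) (hS : S.card = r)
    (B : Matrix (Fin n) (Fin n) ℝ) (K : Idx n m) :
    contr n q m S (extPow n q B (stdVec n q)) K =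
      topDet (blk hq) (fun i c => B (S.orderEmbOfFin hS i) (Fin.castLE h c))
        (fun i c => B (K.1.orderEmbOfFin K.2 i) (Fin.castLE h c)) := by
  subst hq
  by_cases hd : Disjoint S K.1
  · have hc : (S ∪ K.1).card = r + m := by rw [Finset.card_union_of_disjoint hd, hS, K.2]
    rw [contr, dif_pos ⟨hd, hc⟩, extPow_std h, topDet_apply]
    let u : Fin (r + m) → Fin n := Fin.append (S.orderEmbOfFin hS) (K.1.orderEmbOfFin K.2)
    have hu : ∀ i, u i ∈ S ∪ K.1 := by
      intro i
      refine Fin.addCases (fun a => ?_) (fun a => ?_) i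
      · simp only [u, Fin.append_left, Finset.mem_union]
        exact Or.inl (Finset.orderEmbOfFin_mem _ _ _)
      · simp only [u, Fin.append_right, Finset.mem_union]
        exact Or.inr (Finset.orderEmbOfFin_mem _ _ _)
    have hui : Function.Injective u := by
      rw [Fin.append_injective_iff]
      refine ⟨(S.orderEmbOfFin hS).injective, (K.1.orderEmbOfFin K.2).injective, ?_⟩
      intro a b h
      exact Finset.disjoint_left.mp hd (Finset.orderEmbOfFin_mem S hS a)
        (h ▸ Finset.orderEmbOfFin_mem K.1 K.2 b)
    let τ : Fin (r + m) → Fin (r + m) := fun i => ((S ∪ K.1).orderIsoOfFin hc).symm ⟨u i, hu i⟩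
    have hτi : Function.Injective τ := by
      intro a b hab
      have := ((S ∪ K.1).orderIsoOfFin hc).symm.injective hab
      exact hui (congrArg Subtype.val this)
    let σ : Equiv.Perm (Fin (r + m)) := Equiv.ofBijective τ (Finite.injective_iff_bijective.mp hτi)
    have hσ : ∀ i, (S ∪ K.1).orderEmbOfFin hc (σ i) = u i := by
      intro i
      have := ((S ∪ K.1).orderIsoOfFin hc).apply_symm_apply ⟨u i, hu i⟩
      have h2 := congrArg Subtype.val this
      exact h2
    have hs := sign_shuffle S K.1 hS K.2 hd σ u rfl (fun i j => by
      rw [← hσ, ← hσ, OrderEmbedding.lt_iff_lt])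
    rw [← hs, ← Matrix.det_permute]
    congr 1
    ext i c
    simp only [Matrix.submatrix_apply, Matrix.of_apply, id, hσ]
    refine Fin.addCases (fun a => ?_) (fun a => ?_) i
    · simp [u, blk]
    · simp [u, blk]
  · rw [contr, dif_neg (fun hh => hd hh.1), topDet_apply]
    obtain ⟨x, hx1, hx2⟩ := Finset.not_disjoint_iff.mp hd
    have h1 : x ∈ Set.range (S.orderEmbOfFin hS) := by rw [Finset.range_orderEmbOfFin]; exact hx1
    have h2 : x ∈ Set.range (K.1.orderEmbOfFin K.2) := by
      rw [Finset.range_orderEmbOfFin]; exact hx2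
    obtain ⟨a, ha⟩ := h1
    obtain ⟨b, hb⟩ := h2
    symm
    apply Matrix.det_zero_of_row_eq (i := blk rfl (Sum.inl a)) (j := blk rfl (Sum.inr b))
    · simp
    · ext c; simp [ha, hb]

/-- Second-step Jacobian acting on the standard vector. -/
theorem extPow_first_row {n m : ℕ} (h : m + 1 ≤ n) (T : Matrix (Fin n) (Fin n) ℝ)
    (hT : ∀ i j : Fin n, (i : ℕ) ≠ 0 → T i j = if i = j then 1 else 0) :
    extPow n (m + 1) T (stdVec n (m + 1)) =
      T ⟨0, by omega⟩ ⟨0, by omega⟩ • stdVec n (m + 1) := by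
  funext J
  rw [extPow_std h, Pi.smul_apply, stdVec_eq h]
  by_cases hJ : J = stdIdx h
  · subst hJ
    rw [if_pos rfl, Matrix.det_of_isUpperTriangular]
    · rw [Fin.prod_univ_succ, Finset.prod_eq_one]
      · simp only [Matrix.submatrix_apply, stdIdx_emb, smul_eq_mul]; rfl
      · intro i _
        simp only [Matrix.submatrix_apply, stdIdx_emb]
        rw [hT _ _ (by simp), if_pos rfl]
    · intro i j hij
      simp only [Matrix.submatrix_apply, stdIdx_emb]
      have : j < i := hij
      rw [Fin.lt_def] at this
      rw [hT _ _ (by simp; intro hh; simp [hh] at this), if_neg]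
      intro hh
      simp [Fin.ext_iff] at hh
      omega
  · rw [if_neg hJ, smul_zero]
    have : ∃ i ∈ J.1, i ∉ (stdIdx h).1 := by
      by_contra! hh
      exact hJ (Subtype.ext (Finset.eq_of_subset_of_card_le hh (by rw [J.2, (stdIdx h).2])))
    obtain ⟨i, hi, hi'⟩ := this
    have hi2 : i ∈ Set.range (J.1.orderEmbOfFin J.2) := by
      rw [Finset.range_orderEmbOfFin]; exact hi
    obtain ⟨a, rfl⟩ := hi2
    simp only [stdIdx, Finset.mem_filter, Finset.mem_univ, true_and, not_lt] at hi'
    apply Matrix.det_eq_zero_of_row_eq_zero a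
    intro b
    rw [Matrix.submatrix_apply, hT _ _ (by omega), if_neg]
    intro hh
    have := congrArg Fin.val hh
    simp at this
    omega

theorem det_first_row {n : ℕ} (h : 0 < n) (T : Matrix (Fin n) (Fin n) ℝ)
    (hT : ∀ i j : Fin n, (i : ℕ) ≠ 0 → T i j = if i = j then 1 else 0) :
    T.det = T ⟨0, h⟩ ⟨0, h⟩ := by
  obtain ⟨n, rfl⟩ : ∃ k, n = k + 1 := ⟨n - 1, by omega⟩
  rw [Matrix.det_of_isUpperTriangular, Fin.prod_univ_succ, Finset.prod_eq_one]
  · rw [mul_one]; rfl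
  · intro i _
    rw [hT _ _ (by simp), if_pos rfl]
  · intro i j hij
    have : j < i := hij
    rw [hT _ _ (by rw [Fin.lt_def] at this; omega), if_neg this.ne']

open MeasureTheory in
theorem hasFDerivAt_param {E F : Type} [NormedAddCommGroup E] [NormedSpace ℝ E]
    [ProperSpace E] [NormedAddCommGroup F] [NormedSpace ℝ F] (G : E × ℝ → F)
    (hG : ContDiff ℝ ∞ G) (x : E) :
    HasFDerivAt (fun x => ∫ t in (0:ℝ)..1, G (x, t))
      (∫ t in (0:ℝ)..1, (fderiv ℝ G (x, t)).comp (ContinuousLinearMap.inl ℝ E ℝ)) x := by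
  have hG' : Continuous (fun z : E × ℝ => (fderiv ℝ G z).comp (ContinuousLinearMap.inl ℝ E ℝ)) :=
    (hG.continuous_fderiv (by simp)).clm_comp continuous_const
  obtain ⟨C, hC⟩ := ((isCompact_closedBall x 1).prod (isCompact_Icc (a := (0:ℝ)) (b := 1))).exists_bound_of_continuousOn
    hG'.continuousOn
  refine intervalIntegral.hasFDerivAt_integral_of_dominated_of_fderiv_le (μ := volume)
    (F := fun x t => G (x, t)) (s := Metric.closedBall x 1) (bound := fun _ => C)
    (F' := fun x t => (fderiv ℝ G (x, t)).comp (ContinuousLinearMap.inl ℝ E ℝ))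
    (Metric.closedBall_mem_nhds x one_pos) ?_ ?_ ?_ ?_ ?_ ?_
  · exact Filter.Eventually.of_forall fun y =>
      (hG.continuous.comp (by fun_prop : Continuous fun t : ℝ => (y, t))).aestronglyMeasurable
  · exact (hG.continuous.comp (by fun_prop : Continuous fun t : ℝ => (x, t))).intervalIntegrable _ _
  · exact (hG'.comp (by fun_prop : Continuous fun t : ℝ => (x, t))).aestronglyMeasurable
  · refine Filter.Eventually.of_forall fun t ht y hy => hC (y, t) ⟨hy, ?_⟩
    rw [Set.uIoc_of_le zero_le_one] at ht
    exact ⟨ht.1.le, ht.2⟩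
  · exact intervalIntegrable_const
  · refine Filter.Eventually.of_forall fun t _ y _ => ?_
    have h1 : HasFDerivAt G (fderiv ℝ G (y, t)) (y, t) :=
      ((hG.differentiable (by simp)) _).hasFDerivAt
    have h2 : HasFDerivAt (fun y : E => (y, t)) (ContinuousLinearMap.inl ℝ E ℝ) y :=
      hasFDerivAt_prodMk_left y t
    exact h1.comp y h2

theorem contDiff_param_nat {E : Type} [NormedAddCommGroup E] [NormedSpace ℝ E]
    [ProperSpace E] (k : ℕ) : ∀ (F : Type) [NormedAddCommGroup F] [NormedSpace ℝ F] (G : E × ℝ → F)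
    (_ : ContDiff ℝ ∞ G), ContDiff ℝ k (fun x => ∫ t in (0:ℝ)..1, G (x, t)) := by
  induction k with
  | zero =>
    intro F _ _ G hG
    exact contDiff_zero.mpr (continuous_iff_continuousAt.mpr fun x =>
      (hasFDerivAt_param G hG x).continuousAt)
  | succ k ih =>
    intro F _ _ G hG
    push_cast
    rw [contDiff_succ_iff_hasFDerivAt]
    refine ⟨_, ?_, fun x => hasFDerivAt_param G hG x⟩
    refine ih (E →L[ℝ] F) (fun z => (fderiv ℝ G z).comp (ContinuousLinearMap.inl ℝ E ℝ)) ?_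
    exact (hG.fderiv_right (m := ∞) (by simp)).clm_comp contDiff_const

theorem contDiff_param {E F : Type} [NormedAddCommGroup E] [NormedSpace ℝ E]
    [ProperSpace E] [NormedAddCommGroup F] [NormedSpace ℝ F] (G : E × ℝ → F)
    (hG : ContDiff ℝ ∞ G) : ContDiff ℝ ∞ (fun x => ∫ t in (0:ℝ)..1, G (x, t)) :=
  contDiff_infty.mpr fun k => contDiff_param_nat k F G hG

/-- A global primitive in one coordinate direction. -/
theorem exists_primitive {n : ℕ} (a : Fin n) (f : (Fin n → ℝ) → ℝ) (hf : ContDiff ℝ ∞ f) :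
    ∃ H : (Fin n → ℝ) → ℝ, ContDiff ℝ ∞ H ∧ ∀ z, fderiv ℝ H z (Pi.single a 1) = f z := by
  have hupd : ContDiff ℝ ∞ (fun p : (Fin n → ℝ) × ℝ => Function.update p.1 a (p.2 * p.1 a)) := by
    rw [contDiff_pi]
    intro i
    by_cases h : i = a
    · subst h
      simp only [Function.update_self]
      fun_prop
    · simp only [Function.update_of_ne h]
      fun_prop
  have hG : ContDiff ℝ ∞ (fun p : (Fin n → ℝ) × ℝ =>
      p.1 a * f (Function.update p.1 a (p.2 * p.1 a))) := by
    refine ContDiff.mul (by fun_prop) (hf.comp hupd)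
  refine ⟨fun z => ∫ t in (0:ℝ)..1, z a * f (Function.update z a (t * z a)),
    contDiff_param _ hG, fun z => ?_⟩
  have hH := (contDiff_param _ hG).differentiable (by simp) z
  have e : ∀ z : Fin n → ℝ, ∫ t in (0:ℝ)..1, z a * f (Function.update z a (t * z a)) =
      ∫ s in (0:ℝ)..(z a), f (Function.update z a s) := by
    intro z
    rw [intervalIntegral.integral_const_mul]
    have := intervalIntegral.smul_integral_comp_mul_right (a := 0) (b := 1)
      (fun s => f (Function.update z a s)) (z a)
    simpa using this
  have h1 : HasDerivAt (fun s : ℝ => ∫ t in (0:ℝ)..1,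
      (z + s • Pi.single a (1:ℝ) : Fin n → ℝ) a *
        f (Function.update (z + s • Pi.single a (1:ℝ) : Fin n → ℝ) a
          (t * (z + s • Pi.single a (1:ℝ) : Fin n → ℝ) a)))
      (fderiv ℝ (fun z : Fin n → ℝ => ∫ t in (0:ℝ)..1, z a * f (Function.update z a (t * z a))) z
        (Pi.single a 1)) 0 := by
    have hz : HasFDerivAt (fun z : Fin n → ℝ => ∫ t in (0:ℝ)..1,
        z a * f (Function.update z a (t * z a)))
        (fderiv ℝ (fun z : Fin n → ℝ => ∫ t in (0:ℝ)..1, z a * f (Function.update z a (t * z a))) z)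
        (z + (0:ℝ) • Pi.single a (1:ℝ)) := by simpa using hH.hasFDerivAt
    have hl : HasDerivAt (fun s : ℝ => (z + s • Pi.single a (1:ℝ) : Fin n → ℝ))
        (Pi.single a 1) 0 := by
      simpa using ((hasDerivAt_id (0:ℝ)).smul_const (Pi.single a (1:ℝ) : Fin n → ℝ)).const_add z
    exact hz.comp_hasDerivAt (0:ℝ) hl
  have e2 : ∀ s : ℝ, ∫ t in (0:ℝ)..1,
      (z + s • Pi.single a (1:ℝ) : Fin n → ℝ) a *
        f (Function.update (z + s • Pi.single a (1:ℝ) : Fin n → ℝ) a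
          (t * (z + s • Pi.single a (1:ℝ) : Fin n → ℝ) a)) =
      ∫ t in (0:ℝ)..(z a + s), f (Function.update z a t) := by
    intro s
    rw [e]
    have : ∀ t, Function.update (z + s • Pi.single a (1:ℝ) : Fin n → ℝ) a t =
        Function.update z a t := by
      intro t; funext i
      by_cases h : i = a
      · subst h; simp
      · simp [h]
    simp [this]
  simp only [e2] at h1
  have hc : Continuous (fun t => f (Function.update z a t)) :=
    hf.continuous.comp (continuous_const.update a continuous_id)
  have h2 := (hc.integral_hasStrictDerivAt 0 (z a)).hasDerivAt
  have h3 : HasDerivAt (fun s : ℝ => ∫ t in (0:ℝ)..(z a + s), f (Function.update z a t))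
      (f (Function.update z a (z a))) 0 := by
    have h2' : HasDerivAt (fun u => ∫ t in (0:ℝ)..u, f (Function.update z a t))
      (f (Function.update z a (z a))) (z a + 0) := by simpa using h2
    exact h2'.comp_const_add (z a) 0
  rw [Function.update_eq_self] at h3
  exact h1.unique h3

theorem exists_cutoff {n : ℕ} (f : (Fin n → ℝ) → ℝ) (V : Set (Fin n → ℝ)) (hV : IsOpen V)
    (hf : ContDiffOn ℝ ∞ f V) (z₀ : Fin n → ℝ) (hz : z₀ ∈ V) :
    ∃ g : (Fin n → ℝ) → ℝ, ContDiff ℝ ∞ g ∧ ∀ᶠ z in nhds z₀, g z = f z := by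
  obtain ⟨ε, hε, hsub⟩ := Metric.nhds_basis_closedBall.mem_iff.mp (hV.mem_nhds hz)
  let b : ContDiffBump z₀ := ⟨ε / 2, ε, by positivity, by linarith⟩
  refine ⟨fun z => b z * f z, ?_, ?_⟩
  · rw [contDiff_iff_contDiffAt]
    intro x
    by_cases hx : x ∈ V
    · exact b.contDiff.contDiffAt.mul (hf.contDiffAt (hV.mem_nhds hx))
    · have hx' : x ∈ (Metric.closedBall z₀ ε)ᶜ := fun h => hx (hsub h)
      have : (fun z => b z * f z) =ᶠ[nhds x] fun _ => 0 := by
        filter_upwards [Metric.isClosed_closedBall.isOpen_compl.mem_nhds hx'] with y hy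
        rw [b.zero_of_le_dist, zero_mul]
        simp only [Set.mem_compl_iff, Metric.mem_closedBall, not_le] at hy
        exact hy.le
      exact contDiffAt_const.congr_of_eventuallyEq this
  · filter_upwards [b.eventuallyEq_one] with z hz
    rw [hz]; simp

theorem exists_diffeo {n : ℕ} (Φ : (Fin n → ℝ) → (Fin n → ℝ)) (V : Set (Fin n → ℝ))
    (hV : IsOpen V) (hΦ : ContDiffOn ℝ ∞ Φ V) (p : Fin n → ℝ) (hp : p ∈ V)
    (hdet : (jac Φ p).det ≠ 0) : ∃ W ⊆ V, p ∈ W ∧ IsSmoothDiffeoOn Φ W := by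
  have hjac : ∀ x, LinearMap.toMatrix' (fderiv ℝ Φ x : (Fin n → ℝ) →ₗ[ℝ] (Fin n → ℝ)) = jac Φ x := by
    intro x; ext i j
    simp [jac, LinearMap.toMatrix'_apply]
  have hinv : ∀ x, (jac Φ x).det ≠ 0 → ∃ f' : (Fin n → ℝ) ≃L[ℝ] (Fin n → ℝ),
      (f' : (Fin n → ℝ) →L[ℝ] (Fin n → ℝ)) = fderiv ℝ Φ x := by
    intro x hx
    have : (fderiv ℝ Φ x).det ≠ 0 := by
      rw [← hjac, LinearMap.det_toMatrix'] at hx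
      exact hx
    exact ⟨(fderiv ℝ Φ x).toContinuousLinearEquivOfDetNeZero this, by ext; simp⟩
  have hat : ∀ x ∈ V, ContDiffAt ℝ ∞ Φ x := fun x hx => hΦ.contDiffAt (hV.mem_nhds hx)
  have hder : ∀ x ∈ V, HasFDerivAt Φ (fderiv ℝ Φ x) x := fun x hx =>
    ((hat x hx).differentiableAt (by simp)).hasFDerivAt
  have hcont : ContinuousOn (fun x => (jac Φ x).det) V := by
    have h1 : ContinuousOn (fderiv ℝ Φ) V := hΦ.continuousOn_fderiv_of_isOpen hV (by simp)
    have h2 : Continuous (fun L : (Fin n → ℝ) →L[ℝ] (Fin n → ℝ) =>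
        (Matrix.of fun i j => L (Pi.single j 1) i : Matrix (Fin n) (Fin n) ℝ).det) := by
      apply Continuous.matrix_det
      refine continuous_matrix fun i j => ?_
      have h3 : Continuous (fun L : (Fin n → ℝ) →L[ℝ] (Fin n → ℝ) => L (Pi.single j 1)) := by
        fun_prop
      exact (continuous_apply i).comp h3
    exact h2.comp_continuousOn h1
  have hV2 : IsOpen (V ∩ (fun x => (jac Φ x).det) ⁻¹' {0}ᶜ) :=
    hcont.isOpen_inter_preimage hV isOpen_compl_singleton
  obtain ⟨f', hf'⟩ := hinv p hdet
  let e := (hat p hp).toOpenPartialHomeomorph Φ (f' := f') (by rw [hf']; exact hder p hp) (by simp)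
  have he : (e : (Fin n → ℝ) → (Fin n → ℝ)) = Φ := rfl
  have hpe : p ∈ e.source := (hat p hp).mem_toOpenPartialHomeomorph_source _ _
  set V2 := V ∩ (fun x => (jac Φ x).det) ⁻¹' {0}ᶜ with hV2def
  have hW : IsOpen (e.source ∩ V2) := e.open_source.inter hV2
  refine ⟨e.source ∩ V2, fun x hx => hx.2.1, ⟨hpe, hp, hdet⟩, hW, ?_,
    hΦ.mono fun x hx => hx.2.1, e.symm, ?_, ?_, ?_⟩
  · exact e.isOpen_image_of_subset_source hW Set.inter_subset_left
  · rintro _ ⟨x, hx, rfl⟩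
    obtain ⟨g', hg'⟩ := hinv x hx.2.2
    refine ContDiffAt.contDiffWithinAt ?_
    apply e.contDiffAt_symm (f₀' := g') (e.map_source hx.1)
    · rw [e.left_inv hx.1, he, hg']; exact hder x hx.2.1
    · rw [e.left_inv hx.1]; exact hat x hx.2.1
  · intro x hx; exact e.left_inv hx.1
  · rintro _ ⟨x, hx, rfl⟩
    exact e.right_inv (e.map_source hx.1)

theorem jac_eq {n : ℕ} (φ : (Fin n → ℝ) → (Fin n → ℝ)) (x : Fin n → ℝ) :
    jac φ x = LinearMap.toMatrix' (fderiv ℝ φ x : (Fin n → ℝ) →ₗ[ℝ] (Fin n → ℝ)) := by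
  ext i j
  simp [jac, LinearMap.toMatrix'_apply]

theorem jac_comp {n : ℕ} (f g : (Fin n → ℝ) → (Fin n → ℝ)) (x : Fin n → ℝ)
    (hf : DifferentiableAt ℝ f (g x)) (hg : DifferentiableAt ℝ g x) :
    jac (fun y => f (g y)) x = jac f (g x) * jac g x := by
  have : fderiv ℝ (fun y => f (g y)) x = (fderiv ℝ f (g x)).comp (fderiv ℝ g x) :=
    fderiv_comp x hf hg
  rw [jac_eq, jac_eq, jac_eq, ← LinearMap.toMatrix'_comp, this]
  rfl

theorem jac_row {n : ℕ} (f : (Fin n → ℝ) → (Fin n → ℝ)) (x : Fin n → ℝ)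
    (hf : DifferentiableAt ℝ f x) (i j : Fin n) :
    jac f x i j = fderiv ℝ (fun y => f y i) x (Pi.single j 1) := by
  have h := (hasFDerivAt_pi'.mp hf.hasFDerivAt i).fderiv
  rw [h]
  rfl

theorem jac_row_coord {n : ℕ} (f : (Fin n → ℝ) → (Fin n → ℝ)) (x : Fin n → ℝ)
    (hf : DifferentiableAt ℝ f x) (i j l : Fin n) (h : ∀ y, f y i = y l) :
    jac f x i j = if l = j then 1 else 0 := by
  rw [jac_row f x hf]
  simp only [h]
  have : HasFDerivAt (fun y : Fin n → ℝ => y l)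
    (ContinuousLinearMap.proj l : (Fin n → ℝ) →L[ℝ] ℝ) x := hasFDerivAt_apply l x
  rw [this.fderiv]
  simp [Pi.single_apply]

/-- contraction as a continuous linear map -/
noncomputable def contrL (n q m : ℕ) (S : Finset (Fin n)) : MultiVec n q →L[ℝ] MultiVec n m :=
  LinearMap.toContinuousLinearMap
    { toFun := contr n q m S
      map_add' := by
        intro a b; funext K
        simp only [contr, Pi.add_apply]
        split_ifs <;> ring
      map_smul' := by
        intro c a; funext K
        simp only [contr, Pi.smul_apply, smul_eq_mul, RingHom.id_apply]
        split_ifs <;> ring }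

theorem contrL_apply (n q m : ℕ) (S : Finset (Fin n)) (w : MultiVec n q) :
    contrL n q m S w = contr n q m S w := rfl

theorem slice_nambu {n r m q : ℕ} (hq : r + (m + 1) = q) (hn : q ≤ n) (S : Finset (Fin n))
    (hS : S.card = r) (U : Set (Fin n → ℝ)) (P : (Fin n → ℝ) → MultiVec n q)
    (hP : IsNambu n q P U) : IsNambu n (m + 1) (fun x => contr n q (m + 1) S (P x)) U := by
  have hΛs : ContDiffOn ℝ ∞ (fun x => contr n q (m + 1) S (P x)) U :=
    (contrL n q (m + 1) S).contDiff.comp_contDiffOn hP.1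
  refine ⟨hΛs, fun p hp hne => ?_⟩
  obtain ⟨K, hK⟩ := Function.ne_iff.mp hne
  have hPp : P p ≠ 0 := by
    intro h0
    apply hne
    simp only [h0, ← contrL_apply, map_zero]
  obtain ⟨W₀, hpW, hWU, φ, ⟨hWo, hWio, hφ, ψ, hψ, hψφ, -⟩, hφP⟩ := hP.2 p hp hPp
  set Λ : (Fin n → ℝ) → MultiVec n (m + 1) := fun x => contr n q (m + 1) S (P x) with hΛ
  have hφd : ∀ x ∈ W₀, DifferentiableAt ℝ φ x := fun x hx =>
    (hφ.contDiffAt (hWo.mem_nhds hx)).differentiableAt (by simp)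
  have hBA : ∀ x ∈ W₀, jac ψ (φ x) * jac φ x = 1 := by
    intro x hx
    have hψd : DifferentiableAt ℝ ψ (φ x) :=
      (hψ.contDiffAt (hWio.mem_nhds ⟨x, hx, rfl⟩)).differentiableAt (by simp)
    rw [← jac_comp ψ φ x hψd (hφd x hx), jac_eq]
    have : (fun y => ψ (φ y)) =ᶠ[nhds x] id := by
      filter_upwards [hWo.mem_nhds hx] with y hy using hψφ y hy
    rw [this.fderiv_eq, fderiv_id]
    exact LinearMap.toMatrix'_id
  set B : (Fin n → ℝ) → Matrix (Fin n) (Fin n) ℝ := fun x => jac ψ (φ x) with hB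
  have hAB : ∀ x ∈ W₀, jac φ x * B x = 1 := fun x hx => mul_eq_one_comm.mp (hBA x hx)
  have hPB : ∀ x ∈ W₀, P x = extPow n q (B x) (stdVec n q) := by
    intro x hx
    rw [← hφP x hx, ← extPow_mul, hBA x hx, extPow_one]
  have hΛB : ∀ x ∈ W₀, Λ x = fun K : Idx n (m + 1) =>
      topDet (blk hq) (fun i c => B x (S.orderEmbOfFin hS i) (Fin.castLE hn c))
        (fun i c => B x (K.1.orderEmbOfFin K.2 i) (Fin.castLE hn c)) := by
    intro x hx
    funext K'
    simp only [hΛ]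
    rw [hPB x hx, contr_eq hn hq S hS]
  -- the first coordinate change
  let Y : (Fin n → ℝ) → (Fin n → ℝ) := fun x i =>
    if h : (i : ℕ) < m + 1 then x (K.1.orderEmbOfFin K.2 ⟨i, h⟩)
    else if h' : (i : ℕ) < q then x (S.orderEmbOfFin hS ⟨i - (m + 1), by omega⟩) else φ x i
  have hYs : ContDiffOn ℝ ∞ Y W₀ := by
    rw [contDiffOn_pi]
    intro i
    by_cases h : (i : ℕ) < m + 1
    · simp only [Y, dif_pos h]
      fun_prop
    · by_cases h' : (i : ℕ) < q
      · simp only [Y, dif_neg h, dif_pos h']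
        fun_prop
      · simp only [Y, dif_neg h, dif_neg h']
        exact contDiffOn_pi.mp hφ i
  have hYd : ∀ x ∈ W₀, DifferentiableAt ℝ Y x := fun x hx =>
    (hYs.contDiffAt (hWo.mem_nhds hx)).differentiableAt (by simp)
  have hCB1 : ∀ x ∈ W₀, ∀ (i j : Fin n) (h : (i : ℕ) < m + 1),
      (jac Y x * B x) i j = B x (K.1.orderEmbOfFin K.2 ⟨i, h⟩) j := by
    intro x hx i j h
    rw [Matrix.mul_apply]
    simp only [jac_row_coord Y x (hYd x hx) i _ (K.1.orderEmbOfFin K.2 ⟨i, h⟩)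
      (fun y => by simp only [Y, dif_pos h])]
    simp
  have hCB2 : ∀ x ∈ W₀, ∀ (i j : Fin n) (h : ¬ (i : ℕ) < m + 1) (h' : (i : ℕ) < q),
      (jac Y x * B x) i j = B x (S.orderEmbOfFin hS ⟨i - (m + 1), by omega⟩) j := by
    intro x hx i j h h'
    rw [Matrix.mul_apply]
    simp only [jac_row_coord Y x (hYd x hx) i _ (S.orderEmbOfFin hS ⟨i - (m + 1), by omega⟩)
      (fun y => by simp only [Y, dif_neg h, dif_pos h'])]
    simp
  have hCB3 : ∀ x ∈ W₀, ∀ (i j : Fin n) (_ : ¬ (i : ℕ) < q),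
      (jac Y x * B x) i j = if i = j then 1 else 0 := by
    intro x hx i j h'
    have h : ¬ (i : ℕ) < m + 1 := by omega
    have : ∀ l, jac Y x i l = jac φ x i l := by
      intro l
      rw [jac_row Y x (hYd x hx), jac_row φ x (hφd x hx)]
      simp only [Y, dif_neg h, dif_neg h']
    rw [Matrix.mul_apply]
    simp only [this]
    rw [← Matrix.mul_apply, hAB x hx, Matrix.one_apply]
  have hYext : ∀ x ∈ W₀, extPow n (m + 1) (jac Y x) (Λ x) = Λ x K • stdVec n (m + 1) := by
    intro x hx
    have hm : m + 1 ≤ n := by omega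
    funext J
    rw [hΛB x hx, extPow_topDet, Pi.smul_apply, stdVec_eq hm]
    by_cases hJ : J = stdIdx hm
    · subst hJ
      rw [if_pos rfl, smul_eq_mul, mul_one]
      congr 1
      funext i c
      rw [stdIdx_emb, hCB1 x hx _ _ (by rw [Fin.val_castLE]; exact i.2)]
      rfl
    · rw [if_neg hJ, smul_zero]
      have : ∃ i ∈ J.1, i ∉ (stdIdx hm).1 := by
        by_contra! hh
        exact hJ (Subtype.ext (Finset.eq_of_subset_of_card_le hh (by rw [J.2, (stdIdx hm).2])))
      obtain ⟨i, hi, hi'⟩ := this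
      have hi2 : i ∈ Set.range (J.1.orderEmbOfFin J.2) := by
        rw [Finset.range_orderEmbOfFin]; exact hi
      obtain ⟨a, ha⟩ := hi2
      simp only [stdIdx, Finset.mem_filter, Finset.mem_univ, true_and] at hi'
      by_cases hiq : (i : ℕ) < q
      · rw [topDet_apply]
        apply Matrix.det_zero_of_row_eq
          (i := blk hq (Sum.inl ⟨i - (m + 1), by omega⟩)) (j := blk hq (Sum.inr a))
        · simp
        · ext c
          simp only [Matrix.of_apply, Equiv.symm_apply_apply, Sum.elim_inl, Sum.elim_inr, ha]
          rw [hCB2 x hx _ _ hi' hiq]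
      · apply AlternatingMap.map_coord_zero _ a
        funext c
        rw [ha, hCB3 x hx _ _ hiq, if_neg]
        · rfl
        · intro hh
          have := congrArg Fin.val hh
          simp at this
          omega
  have hYdet : (jac Y p).det ≠ 0 := by
    intro h0
    obtain ⟨v, hv0, hv⟩ := Matrix.exists_mulVec_eq_zero_iff.mpr h0
    apply hv0
    set u := (jac φ p).mulVec v with hu
    have hvu : v = (B p).mulVec u := by
      rw [hu, Matrix.mulVec_mulVec, hBA p hpW, Matrix.one_mulVec]
    have hCBu : (jac Y p * B p).mulVec u = 0 := by
      rw [← Matrix.mulVec_mulVec, ← hvu, hv]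
    have hu1 : ∀ i : Fin n, ¬ (i : ℕ) < q → u i = 0 := by
      intro i hi
      have := congrFun hCBu i
      simp only [Matrix.mulVec, dotProduct, hCB3 p hpW i _ hi] at this
      simpa using this
    let M := (Matrix.of fun i => Sum.elim
      (fun i c => B p (S.orderEmbOfFin hS i) (Fin.castLE hn c))
      (fun i c => B p (K.1.orderEmbOfFin K.2 i) (Fin.castLE hn c)) ((blk hq).symm i) :
        Matrix (Fin q) (Fin q) ℝ)
    have hM : M.det ≠ 0 := by
      have h := hK
      rw [hΛB p hpW] at h
      exact h
    have hsum : ∀ i : Fin n, ∑ c : Fin q, (jac Y p * B p) i (Fin.castLE hn c) *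
        u (Fin.castLE hn c) = 0 := by
      intro i
      have h1 := congrFun hCBu i
      rw [Matrix.mulVec, dotProduct] at h1
      refine Eq.trans (Fintype.sum_of_injective (Fin.castLE hn) (Fin.castLE_injective hn) _ _
        ?_ (fun _ => rfl)) h1
      intro j hj
      rw [hu1 j, mul_zero]
      intro hjq
      exact hj ⟨⟨j, hjq⟩, rfl⟩
    have hMu : M.mulVec (fun c => u (Fin.castLE hn c)) = 0 := by
      funext i
      obtain ⟨i, rfl⟩ := (blk hq).surjective i
      rcases i with i | i
      · have := hsum ⟨i + (m + 1), by omega⟩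
        simp only [hCB2 p hpW ⟨i + (m + 1), by omega⟩ _
          (by change ¬ (i : ℕ) + (m + 1) < m + 1; omega)
          (by change (i : ℕ) + (m + 1) < q; omega)] at this
        simpa [Matrix.mulVec, dotProduct, M] using this
      · have := hsum ⟨i, by omega⟩
        simp only [hCB1 p hpW ⟨i, by omega⟩ _ i.2] at this
        simpa [Matrix.mulVec, dotProduct, M] using this
    have hu2 : (fun c => u (Fin.castLE hn c)) = 0 := by
      by_contra hne
      exact hM (Matrix.exists_mulVec_eq_zero_iff.mp ⟨_, hne, hMu⟩)
    have hu3 : u = 0 := by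
      funext i
      by_cases hi : (i : ℕ) < q
      · exact congrFun hu2 ⟨i, hi⟩
      · exact hu1 i hi
    rw [hvu, hu3, Matrix.mulVec_zero]
  -- shrink to where `Λ x K ≠ 0`
  have hΛK : ContDiffOn ℝ ∞ (fun x => Λ x K) W₀ := contDiffOn_pi.mp (hΛs.mono hWU) K
  have hV1 : IsOpen (W₀ ∩ (fun x => Λ x K) ⁻¹' {0}ᶜ) :=
    hΛK.continuousOn.isOpen_inter_preimage hWo isOpen_compl_singleton
  obtain ⟨W₁, hW₁, hpW₁, hW₁o, hW₁io, -, ψY, hψY, hψYY, -⟩ :=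
    exists_diffeo Y _ hV1 (hYs.mono Set.inter_subset_left) p ⟨hpW, hK⟩ hYdet
  have hfs : ContDiffOn ℝ ∞ (fun z => (Λ (ψY z) K)⁻¹) (Y '' W₁) := by
    have hmaps : Set.MapsTo ψY (Y '' W₁) W₁ := by
      rintro _ ⟨x, hx, rfl⟩
      rw [hψYY x hx]; exact hx
    refine ContDiffOn.inv ((hΛK.mono fun x hx => (hW₁ hx).1).comp hψY hmaps) ?_
    intro z hz
    exact (hW₁ (hmaps hz)).2
  obtain ⟨g, hg, hgf⟩ := exists_cutoff _ _ hW₁io hfs (Y p) ⟨p, hpW₁, rfl⟩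
  have hn0 : 0 < n := by omega
  obtain ⟨H, hH, hHg⟩ := exists_primitive (⟨0, hn0⟩ : Fin n) g hg
  obtain ⟨V₂, hV₂, hV₂o, hpV₂⟩ := eventually_nhds_iff.mp hgf
  let T : (Fin n → ℝ) → (Fin n → ℝ) := fun z i => if (i : ℕ) = 0 then H z else z i
  have hT : ContDiff ℝ ∞ T := by
    rw [contDiff_pi]
    intro i
    by_cases h : (i : ℕ) = 0
    · simp only [T, if_pos h]; exact hH
    · simp only [T, if_neg h]; fun_prop
  have hTd : ∀ z, DifferentiableAt ℝ T z := fun z => hT.differentiable (by simp) z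
  have hT1 : ∀ z, ∀ i j : Fin n, (i : ℕ) ≠ 0 → jac T z i j = if i = j then 1 else 0 := by
    intro z i j hi
    exact jac_row_coord T z (hTd z) i j i (fun y => by simp only [T, if_neg hi])
  have hT0 : ∀ z, jac T z ⟨0, hn0⟩ ⟨0, hn0⟩ = g z := by
    intro z
    rw [jac_row T z (hTd z), ← hHg]
    rfl
  have hYc : ContinuousOn Y W₁ := hYs.continuousOn.mono fun x hx => (hW₁ hx).1
  have hV₃ : IsOpen (W₁ ∩ Y ⁻¹' V₂) := hYc.isOpen_inter_preimage hW₁o hV₂o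
  have hval : ∀ x ∈ W₁ ∩ Y ⁻¹' V₂, g (Y x) = (Λ x K)⁻¹ := by
    intro x hx
    rw [hV₂ _ hx.2, hψYY x hx.1]
  have hjacΦ : ∀ x ∈ W₁ ∩ Y ⁻¹' V₂, jac (fun x => T (Y x)) x = jac T (Y x) * jac Y x :=
    fun x hx => jac_comp T Y x (hTd _) (hYd x (hW₁ hx.1).1)
  obtain ⟨W, hW, hpW', hWd⟩ := exists_diffeo (fun x => T (Y x)) _ hV₃
    (hT.comp_contDiffOn (hYs.mono fun x hx => (hW₁ hx.1).1)) p ⟨hpW₁, hpV₂⟩ (by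
      rw [hjacΦ p ⟨hpW₁, hpV₂⟩, Matrix.det_mul, det_first_row hn0 _ (hT1 _), hT0,
        hval p ⟨hpW₁, hpV₂⟩]
      exact mul_ne_zero (inv_ne_zero hK) hYdet)
  refine ⟨W, hpW', fun x hx => hWU (hW₁ (hW hx).1).1, _, hWd, fun x hx => ?_⟩
  have hx3 := hW hx
  rw [hjacΦ x hx3, extPow_mul]
  have h1 := hYext x (hW₁ hx3.1).1
  simp only [hΛ] at h1
  rw [h1, extPow_smul, extPow_first_row (by omega) _ (hT1 _), hT0, hval x hx3, smul_smul,
    mul_inv_cancel₀, one_smul]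
  exact (hW₁ hx3.1).2

theorem card_slice {n q k : ℕ} (hn : q < n) (hkq : k ≤ q) :
    (sliceIdx n q k).card = q + 1 - k := by
  have h1 : sliceIdx n q k = (Finset.univ.filter fun i : Fin n => (i : ℕ) < q + 1) \
      (Finset.univ.filter fun i : Fin n => (i : ℕ) < k) := by
    ext i
    simp only [sliceIdx, Finset.mem_filter, Finset.mem_univ, true_and, Finset.mem_sdiff]
    omega
  rw [h1, Finset.card_sdiff_of_subset, card_std (by omega), card_std (by omega)]
  intro i hi
  simp only [Finset.mem_filter, Finset.mem_univ, true_and] at hi ⊢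
  omega

theorem slice_model {n q k : ℕ} (hn : q < n) (hkq : k ≤ q) (hk : 1 ≤ k) (x : Fin n → ℝ)
    (J : Idx n (k - 1)) :
    contr n q (k - 1) (sliceIdx n q k) (modelPi n q k x) J =
      (-1 : ℝ) ^ ((q + 1 - k) * (k - 1)) * ellipticSmall n k x J := by
  have hiff : ∀ j : Fin n, Disjoint (sliceIdx n q k) J.1 →
      (((j : ℕ) < q + 1 ∧ sliceIdx n q k ∪ J.1 = (topIdx n q).erase j) ↔
      ((j : ℕ) < k ∧ J.1 = (Finset.univ.filter fun i : Fin n => (i : ℕ) < k).erase j)) := by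
    intro j hd
    have hd' := Finset.disjoint_left.mp hd
    simp only [Finset.ext_iff, sliceIdx, topIdx, Finset.mem_union, Finset.mem_filter,
      Finset.mem_univ, true_and, Finset.mem_erase] at hd' ⊢
    constructor
    · rintro ⟨h1, h2⟩
      have hjk : (j : ℕ) < k := by
        by_contra h
        have := (h2 j).mp (Or.inl ⟨by omega, h1⟩)
        exact this.1 rfl
      refine ⟨hjk, fun a => ?_⟩
      constructor
      · intro ha
        have h3 := (h2 a).mp (Or.inr ha)
        refine ⟨h3.1, ?_⟩
        by_contra h
        exact hd' (a := a) ⟨by omega, h3.2⟩ ha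
      · rintro ⟨h3, h4⟩
        rcases (h2 a).mpr ⟨h3, by omega⟩ with h | h
        · omega
        · exact h
    · rintro ⟨h1, h2⟩
      refine ⟨by omega, fun a => ?_⟩
      rw [h2]
      constructor
      · rintro (h | h)
        · exact ⟨by rintro rfl; omega, h.2⟩
        · exact ⟨h.1, by omega⟩
      · rintro ⟨h3, h4⟩
        by_cases h : (a : ℕ) < k
        · exact Or.inr ⟨h3, h⟩
        · exact Or.inl ⟨by omega, h4⟩
  have hdis : ∀ j : Fin n, J.1 = (Finset.univ.filter fun i : Fin n => (i : ℕ) < k).erase j →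
      Disjoint (sliceIdx n q k) J.1 := by
    intro j h
    rw [h, Finset.disjoint_left]
    intro a ha ha'
    simp only [sliceIdx, Finset.mem_filter, Finset.mem_univ, true_and, Finset.mem_erase] at ha ha'
    omega
  by_cases hd : Disjoint (sliceIdx n q k) J.1
  · have hc : (sliceIdx n q k ∪ J.1).card = q := by
      rw [Finset.card_union_of_disjoint hd, card_slice hn hkq, J.2]; omega
    rw [contr, dif_pos ⟨hd, hc⟩, modelPi, ellipticSmall, Finset.mul_sum, Finset.mul_sum]
    refine Finset.sum_congr rfl fun j _ => ?_
    simp only [hiff j hd]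
    by_cases h : (j : ℕ) < k ∧ J.1 = (Finset.univ.filter fun i : Fin n => (i : ℕ) < k).erase j
    · rw [if_pos h, if_pos h]
      have hs : shufSign (sliceIdx n q k) J.1 = (-1 : ℝ) ^ ((q + 1 - k) * (k - 1)) := by
        rw [shufSign, Finset.filter_true_of_mem, Finset.card_product, card_slice hn hkq, J.2]
        rintro ⟨a, b⟩ hab
        rw [Finset.mem_product, h.2] at hab
        simp only [sliceIdx, Finset.mem_filter, Finset.mem_univ, true_and,
          Finset.mem_erase] at hab
        change b < a
        rw [Fin.lt_def]
        omega
      rw [hs, eps, if_pos h.1, mul_one]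
    · rw [if_neg h, if_neg h, mul_zero, mul_zero]
  · rw [contr, dif_neg (fun hh => hd hh.1), ellipticSmall, Finset.sum_eq_zero, mul_zero]
    intro j _
    rw [if_neg]
    rintro ⟨-, h⟩
    exact hd (hdis j h)


/-- Step 1 of the proof of Theorem 1.2 in the paper: the sliced
structure is an elliptic Nambu structure of order `k-1`. If `Π` is a smooth Nambu
structure of order `q` (with `3 ≤ k ≤ q`) with linear part `Π_{k,q}` at `0`, then
near `0` the sliced `(k-1)`-vector field `Λ = (e*_{k+1} ∧ ⋯ ∧ e*_{q+1}) ⌟ Π` is a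
Nambu structure of order `k-1`, whose linear part at `0` is
`(e*_{k+1} ∧ ⋯ ∧ e*_{q+1}) ⌟ Π_{k,q}`, which equals, up to a sign `s`, the
nondegenerate Type 1 elliptic linear Nambu structure of order `k-1` in the
coordinates `x₁,…,x_k`. -/
theorem sliced_is_elliptic_nambu (n q k : ℕ) (hq : 3 ≤ q) (hn : q < n) (hk3 : 3 ≤ k)
    (hkq : k ≤ q)
    (U : Set (Fin n → ℝ)) (hU : IsOpen U) (h0U : (0 : Fin n → ℝ) ∈ U)
    (P : (Fin n → ℝ) → MultiVec n q) (hN : IsNambu n q P U)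
    (hP0 : P 0 = 0) (hlin : ∀ v : Fin n → ℝ, fderiv ℝ P 0 v = modelPi n q k v) :
    ∃ W : Set (Fin n → ℝ), W ⊆ U ∧ (0 : Fin n → ℝ) ∈ W ∧ IsOpen W ∧
      -- the sliced field `Λ` is a Nambu structure of order `k-1` on `W`,
      IsNambu n (k - 1) (fun x => contr n q (k - 1) (sliceIdx n q k) (P x)) W ∧
      -- its linear part at `0` is the sliced model …
      contr n q (k - 1) (sliceIdx n q k) (P 0) = 0 ∧
      (∀ v : Fin n → ℝ,
        fderiv ℝ (fun x => contr n q (k - 1) (sliceIdx n q k) (P x)) 0 v =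
          contr n q (k - 1) (sliceIdx n q k) (modelPi n q k v)) ∧
      -- … which is, up to sign, the elliptic model of order `k-1` in `x₁,…,x_k`.
      ∃ s : ℝ, (s = 1 ∨ s = -1) ∧
        ∀ (x : Fin n → ℝ) (J : Idx n (k - 1)),
          contr n q (k - 1) (sliceIdx n q k) (modelPi n q k x) J =
            s * ellipticSmall n k x J := by
  obtain ⟨m, rfl⟩ : ∃ m, k = m + 2 := ⟨k - 2, by omega⟩
  have hd : DifferentiableAt ℝ P 0 :=
    (hN.1.contDiffAt (hU.mem_nhds h0U)).differentiableAt (by simp)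
  refine ⟨U, subset_rfl, h0U, hU, ?_, ?_, ?_, (-1 : ℝ) ^ ((q + 1 - (m + 2)) * (m + 2 - 1)),
    neg_one_pow_eq_or ℝ _, fun x J => slice_model hn hkq (by omega) x J⟩
  · exact slice_nambu (m := m) (r := q + 1 - (m + 2)) (by omega) hn.le _
      (card_slice hn hkq) U P hN
  · rw [hP0, ← contrL_apply, map_zero]
  · intro v
    have h := ((contrL n q (m + 2 - 1) (sliceIdx n q (m + 2))).hasFDerivAt.comp
      (0 : Fin n → ℝ) hd.hasFDerivAt).fderiv
    rw [← hlin v, ← contrL_apply]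
    exact congrArg (fun L => L v) h

end NambuLin
end
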